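/- For every real number q with 0 < q < 1, one has S_even(q⁴, q+q⁻¹) = Π_{j≥1} 1/(1 − q^{2j}), the infinite product converging absolutely. -/

import Mathlib

/-!
The sequences in `He` that agree with the ground pattern `0, 1, 0, 1, …` from index `2 * M` on are
counted exactly. Up to a constant factor the weight `q̃ ^ A * t ^ B` is a product over sites:
a site with `i = n + 1` and value `k` contributes `q̃ ^ (i * k) * t ^ (± 1)`, with sign `-` exactly
when `k = 0`. Let `G N` be the weighted count of the words of length `N` without two consecutive
zeros and with non-zero last letter. Splitting off the last letter and looking at whether the one
before it vanishes gives
`G (N + 2) = q̃ ^ (N + 2) / (1 - q̃ ^ (N + 2)) * (t * G (N + 1) + G N)`.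
For `q̃ = q ^ 4` and `t = q + q⁻¹` the solution is
`G N = q ^ (N ^ 2 + 2 * N) * ∏ j < N, (1 - q ^ (2 * (j + 1)))⁻¹` (`hasSum_words`).
For `N = 2 * M` the normalising factor removes the power of `q` exactly
(`weight_extend`), so the truncated sum is the partial product over `j < 2 * M`. Since `He` is the
union of the truncations and all terms are non-negative, the full sum is the supremum of these
partial products, which is the infinite product.
-/

open scoped BigOperators

/-- `He` is the set of sequences `(ω_{-i})_{i ≥ 1}` of non-negative integers (indexed here by
`n : ℕ` with `i = n + 1`) with no two consecutive vanishing entries, agreeing for large `i`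
with the sequence which is `1` at even `i` and `0` at odd `i`. -/
def He : Set (ℕ → ℕ) :=
  {ω | (∀ n : ℕ, ¬(ω n = 0 ∧ ω (n + 1) = 0)) ∧
       (∃ N : ℕ, ∀ n ≥ N, ω n = if (n + 1) % 2 = 0 then 1 else 0)}

/-- `Ho` is as `He`, but agreeing for large `i` with the sequence which is `1` at odd `i`
and `0` at even `i`. -/
def Ho : Set (ℕ → ℕ) :=
  {ω | (∀ n : ℕ, ¬(ω n = 0 ∧ ω (n + 1) = 0)) ∧
       (∃ N : ℕ, ∀ n ≥ N, ω n = if (n + 1) % 2 = 1 then 1 else 0)}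

/-- `A(ω) = Σ_{i odd} i·ω_{-i} + Σ_{i even} i·(ω_{-i} − 1)`. -/
noncomputable def Afun (ω : ℕ → ℕ) : ℤ :=
  ∑ᶠ n : ℕ, (if (n + 1) % 2 = 1 then ((n : ℤ) + 1) * (ω n : ℤ)
             else ((n : ℤ) + 1) * ((ω n : ℤ) - 1))

/-- `B(ω) = 2·(Σ_{i odd} 1{ω_{-i} ≥ 1} − Σ_{i even} 1{ω_{-i} = 0})`. -/
noncomputable def Bfun (ω : ℕ → ℕ) : ℤ :=
  2 * ((∑ᶠ n : ℕ, if (n + 1) % 2 = 1 ∧ 1 ≤ ω n then (1 : ℤ) else 0)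
     - (∑ᶠ n : ℕ, if (n + 1) % 2 = 0 ∧ ω n = 0 then (1 : ℤ) else 0))

/-- `A'(ω) = Σ_{i even} i·ω_{-i} + Σ_{i odd} i·(ω_{-i} − 1)`. -/
noncomputable def A'fun (ω : ℕ → ℕ) : ℤ :=
  ∑ᶠ n : ℕ, (if (n + 1) % 2 = 0 then ((n : ℤ) + 1) * (ω n : ℤ)
             else ((n : ℤ) + 1) * ((ω n : ℤ) - 1))

/-- `B'(ω) = 2·(Σ_{i even} 1{ω_{-i} ≥ 1} − Σ_{i odd} 1{ω_{-i} = 0})`. -/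
noncomputable def B'fun (ω : ℕ → ℕ) : ℤ :=
  2 * ((∑ᶠ n : ℕ, if (n + 1) % 2 = 0 ∧ 1 ≤ ω n then (1 : ℤ) else 0)
     - (∑ᶠ n : ℕ, if (n + 1) % 2 = 1 ∧ ω n = 0 then (1 : ℤ) else 0))

/-- `S_even(q̃, t) = Σ_{ω ∈ H_e} q̃^{A(ω)} t^{B(ω)}`. -/
noncomputable def Seven (q t : ℝ) : ℝ := ∑' ω : He, q ^ Afun ω.1 * t ^ Bfun ω.1

/-- `S_odd(q̃, t) = Σ_{ω ∈ H_o} q̃^{A'(ω)} t^{B'(ω)}`. -/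
noncomputable def Sodd (q t : ℝ) : ℝ := ∑' ω : Ho, q ^ A'fun ω.1 * t ^ B'fun ω.1

/-! ### Words without two consecutive zeros -/

/-- Words of length `N` with no two consecutive zeros and non-zero last letter, encoded as
sequences vanishing from index `N` on. The condition at `n = N - 1` says that the last letter is
non-zero, because the entry at `N` is `0`. -/
def words (N : ℕ) : Set (ℕ → ℕ) :=
  {ω | (∀ n, N ≤ n → ω n = 0) ∧ ∀ n, n < N → ¬(ω n = 0 ∧ ω (n + 1) = 0)}

/-- Contribution of the value `k` at index `n` (site `i = n + 1`) to the weight of a word. -/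
noncomputable def siteWeight (q : ℝ) (n k : ℕ) : ℝ :=
  (q ^ 4) ^ ((n + 1) * k) * if k = 0 then (q + q⁻¹)⁻¹ else q + q⁻¹

/-- Weight of the first `N` letters. -/
noncomputable def wordWeight (q : ℝ) (N : ℕ) (ω : ℕ → ℕ) : ℝ :=
  ∏ n ∈ Finset.range N, siteWeight q n (ω n)

/-- Closed form of the weighted count of `words N`. -/
noncomputable def wordSum (q : ℝ) (N : ℕ) : ℝ :=
  q ^ (N ^ 2 + 2 * N) * ∏ j ∈ Finset.range N, (1 - q ^ (2 * (j + 1)))⁻¹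

lemma siteWeight_nonneg {q : ℝ} (hq0 : 0 < q) (n k : ℕ) : 0 ≤ siteWeight q n k := by
  unfold siteWeight
  split_ifs <;> positivity

lemma wordWeight_nonneg {q : ℝ} (hq0 : 0 < q) (N : ℕ) (ω : ℕ → ℕ) : 0 ≤ wordWeight q N ω :=
  Finset.prod_nonneg fun _ _ => siteWeight_nonneg hq0 _ _

lemma wordWeight_update (q : ℝ) (N : ℕ) (ω : ℕ → ℕ) (k : ℕ) :
    wordWeight q (N + 1) (Function.update ω N k) = siteWeight q N k * wordWeight q N ω := by
  unfold wordWeight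
  rw [Finset.prod_range_succ, mul_comm]
  congr 1
  · simp
  · refine Finset.prod_congr rfl fun n hn => ?_
    rw [Function.update_of_ne (Finset.mem_range.1 hn).ne]

lemma hasSum_siteWeight {q : ℝ} (hq0 : 0 < q) (hq1 : q < 1) (n : ℕ) :
    HasSum (fun k : ℕ => siteWeight q n (k + 1))
      (q ^ (4 * (n + 1)) * (q + q⁻¹) * (1 - q ^ (4 * (n + 1)))⁻¹) := by
  have h := (hasSum_geometric_of_lt_one (r := q ^ (4 * (n + 1))) (by positivity)
    (pow_lt_one₀ hq0.le hq1 (by omega))).mul_left (q ^ (4 * (n + 1)) * (q + q⁻¹))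
  refine h.congr_fun fun k => ?_
  simp only [siteWeight, Nat.succ_ne_zero, if_false]
  ring

lemma hasSum_mul_of_nonneg {α β : Type} {f : α → ℝ} {g : β → ℝ} {a b : ℝ} (hf : HasSum f a)
    (hg : HasSum g b) (hf0 : ∀ x, 0 ≤ f x) (hg0 : ∀ y, 0 ≤ g y) :
    HasSum (fun p : α × β => f p.1 * g p.2) (a * b) :=
  hf.mul hg (hf.summable.mul_of_nonneg hg.summable hf0 hg0)

/-- If every word in `T` arises in exactly one way by putting a non-zero letter at index `N` of a
word in `S`, the weighted sum over `T` is that over `S` times the weighted sum over the letters. -/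
lemma hasSum_append {q : ℝ} (hq0 : 0 < q) (hq1 : q < 1) (N : ℕ) (S T : Set (ℕ → ℕ)) (a : ℝ)
    (hS : HasSum (fun ω : S => wordWeight q N ω) a)
    (hmaps : ∀ ω ∈ S, ∀ k, Function.update ω N (k + 1) ∈ T)
    (hzero : ∀ ω ∈ S, ω N = 0)
    (hsurj : ∀ ω ∈ T, ω N ≠ 0 ∧ Function.update ω N 0 ∈ S) :
    HasSum (fun ω : T => wordWeight q (N + 1) ω)
      (q ^ (4 * (N + 1)) * (q + q⁻¹) * (1 - q ^ (4 * (N + 1)))⁻¹ * a) := by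
  have hk := hasSum_siteWeight hq0 hq1 N
  have hprod := hasSum_mul_of_nonneg hk hS (fun k => siteWeight_nonneg hq0 N (k + 1))
    (fun ω => wordWeight_nonneg hq0 N ω.1)
  let e : ℕ × S → T := fun p => ⟨Function.update p.2.1 N (p.1 + 1), hmaps _ p.2.2 _⟩
  have he : Function.Bijective e := by
    constructor
    · rintro ⟨k, ω, hω⟩ ⟨l, η, hη⟩ h
      have h' : Function.update ω N (k + 1) = Function.update η N (l + 1) :=
        congrArg Subtype.val h
      have hkl : k = l := by
        have := congrFun h' N
        simpa using this
      have hωη : ω = η := by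
        funext n
        by_cases hn : n = N
        · subst hn; rw [hzero ω hω, hzero η hη]
        · have := congrFun h' n
          simpa [hn] using this
      subst hkl; subst hωη; rfl
    · rintro ⟨ω, hω⟩
      obtain ⟨h1, h2⟩ := hsurj ω hω
      refine ⟨(ω N - 1, ⟨_, h2⟩), Subtype.ext ?_⟩
      simp only [e, Function.update_idem]
      rw [Nat.sub_add_cancel (Nat.pos_of_ne_zero h1), Function.update_eq_self]
  rw [← (Equiv.ofBijective e he).hasSum_iff]
  have hfun : (fun ω : T => wordWeight q (N + 1) ω) ∘ Equiv.ofBijective e he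
      = fun p : ℕ × S => siteWeight q N (p.1 + 1) * wordWeight q N p.2 :=
    funext fun p => wordWeight_update q N p.2.1 (p.1 + 1)
  rw [hfun]
  exact hprod

lemma hasSum_words {q : ℝ} (hq0 : 0 < q) (hq1 : q < 1) (N : ℕ) :
    HasSum (fun ω : words N => wordWeight q N ω) (wordSum q N) ∧
    HasSum (fun ω : words (N + 1) => wordWeight q (N + 1) ω) (wordSum q (N + 1)) := by
  have hlt : ∀ m : ℕ, m ≠ 0 → q ^ m < 1 := fun m hm => pow_lt_one₀ hq0.le hq1 hm
  induction N with
  | zero =>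
    have h0 : HasSum (fun ω : words 0 => wordWeight q 0 ω) (wordSum q 0) := by
      have hu : words 0 = {fun _ => 0} := by
        ext ω
        simp [words, funext_iff]
      rw [hu]
      simp [wordWeight, wordSum]
    refine ⟨h0, ?_⟩
    have h1 := hasSum_append hq0 hq1 0 (words 0) (words 1) _ h0
      (fun ω hω k => ⟨fun n hn => ?_, fun n hn => ?_⟩) (fun ω hω => hω.1 0 le_rfl)
      (fun ω hω => ⟨fun h => hω.2 0 (by omega) ⟨h, hω.1 1 le_rfl⟩, fun n _ => ?_, by simp⟩)
    · convert h1 using 1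
      have h4 : 1 - q ^ 4 ≠ 0 := (sub_pos.2 (hlt 4 (by omega))).ne'
      have h2 : 1 - q ^ 2 ≠ 0 := (sub_pos.2 (hlt 2 (by omega))).ne'
      simp [wordSum]
      field_simp
      ring
    · rw [Function.update_of_ne (by omega)]
      exact hω.1 n (by omega)
    · have : n = 0 := by omega
      subst this
      simp
    · by_cases hn : n = 0
      · simp [hn]
      · rw [Function.update_of_ne hn]
        exact hω.1 n (by omega)
  | succ N ih =>
    obtain ⟨h0, h1⟩ := ih
    refine ⟨h1, ?_⟩
    have hdisj : Disjoint (words (N + 1)) (words N) := by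
      rw [Set.disjoint_left]
      intro ω h h'
      exact h.2 N (by omega) ⟨h'.1 N le_rfl, h'.1 (N + 1) (by omega)⟩
    -- a word of length `N` followed by a zero acquires the factor `t⁻¹` from that zero
    have h0' : HasSum (wordWeight q (N + 1) ∘ ((↑) : words N → ℕ → ℕ))
        (wordSum q N * (q + q⁻¹)⁻¹) := by
      refine (h0.mul_right _).congr_fun fun ω => ?_
      simp [wordWeight, Finset.prod_range_succ, siteWeight, ω.2.1 N le_rfl]
    have hU := HasSum.add_disjoint hdisj (f := wordWeight q (N + 1)) h1 h0'
    have h2 := hasSum_append hq0 hq1 (N + 1) (words (N + 1) ∪ words N) (words (N + 2)) _ hU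
      (fun ω hω k => ⟨fun n hn => ?_, fun n hn => ?_⟩)
      (fun ω hω => hω.elim (fun h => h.1 _ le_rfl) (fun h => h.1 _ (by omega)))
      (fun ω hω => ?_)
    · convert h2 using 1
      have h4 : 1 - q ^ (4 * (N + 1 + 1)) = (1 - q ^ (2 * (N + 2))) * (1 + q ^ (2 * (N + 2))) := by
        ring
      have hp : 1 + q ^ (2 * (N + 2)) ≠ 0 := by positivity
      have ha : 1 - q ^ (2 * (N + 2)) ≠ 0 := (sub_pos.2 (hlt _ (by omega))).ne'
      have hb : 1 - q ^ (2 * (N + 1)) ≠ 0 := (sub_pos.2 (hlt _ (by omega))).ne'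
      have ht : q + q⁻¹ ≠ 0 := by positivity
      rw [h4]
      simp only [wordSum, Finset.prod_range_succ]
      rw [show 2 * (N + 1 + 1) = 2 * (N + 2) by ring]
      generalize ∏ j ∈ Finset.range N, (1 - q ^ (2 * (j + 1)))⁻¹ = P
      have key : q ^ ((N + 1 + 1) ^ 2 + 2 * (N + 2)) * (1 + q ^ (2 * (N + 2)))
          = q ^ (4 * (N + 1 + 1)) * ((q + q⁻¹) * q ^ ((N + 1) ^ 2 + 2 * (N + 1))
            + q ^ (N ^ 2 + 2 * N) * (1 - q ^ (2 * (N + 1)))) := by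
        have : q ^ ((N + 1) ^ 2 + 2 * (N + 1)) = q * q ^ (N ^ 2 + 4 * N + 2) := by
          rw [← pow_succ']; congr 1; ring
        rw [this]
        have h5 : (q + q⁻¹) * (q * q ^ (N ^ 2 + 4 * N + 2))
            = (q ^ 2 + 1) * q ^ (N ^ 2 + 4 * N + 2) := by
          field_simp
        rw [h5]
        ring
      have hpos : (1 - q ^ (2 * (N + 1)))⁻¹ * (1 - q ^ (2 * (N + 1))) = 1 := inv_mul_cancel₀ hb
      have htt : (q + q⁻¹) * (q + q⁻¹)⁻¹ = 1 := mul_inv_cancel₀ ht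
      have hpp : (1 + q ^ (2 * (N + 2)))⁻¹ * (1 + q ^ (2 * (N + 2))) = 1 := inv_mul_cancel₀ hp
      rw [mul_inv]
      generalize (1 - q ^ (2 * (N + 2)))⁻¹ = I₂ at *
      generalize (1 - q ^ (2 * (N + 1)))⁻¹ = I₁ at *
      generalize (1 + q ^ (2 * (N + 2)))⁻¹ = J at *
      generalize q + q⁻¹ = t at *
      generalize t⁻¹ = t' at *
      generalize q ^ (4 * (N + 1 + 1)) = X at *
      generalize q ^ ((N + 1 + 1) ^ 2 + 2 * (N + 2)) = C₂ at *
      generalize q ^ ((N + 1) ^ 2 + 2 * (N + 1)) = C₁ at *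
      generalize q ^ (N ^ 2 + 2 * N) = C₀ at *
      generalize 1 + q ^ (2 * (N + 2)) = p at *
      generalize 1 - q ^ (2 * (N + 1)) = b at *
      linear_combination (-C₂ * P * I₁ * I₂) * hpp + (J * P * I₁ * I₂) * key
        + (-X * J * I₂ * C₀ * P) * htt + (X * C₀ * P * J * I₂) * hpos
    · rw [Function.update_of_ne (by omega)]
      exact hω.elim (fun h => h.1 _ (by omega)) (fun h => h.1 _ (by omega))
    · rcases Nat.lt_or_ge n N with hnN | hnN
      · rw [Function.update_of_ne (by omega), Function.update_of_ne (by omega)]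
        exact hω.elim (fun h => h.2 n (by omega)) (fun h => h.2 n hnN)
      · obtain rfl | rfl : n = N ∨ n = N + 1 := by omega
        · simp
        · simp
    · have hlast : ω (N + 1) ≠ 0 := fun h => hω.2 (N + 1) (by omega) ⟨h, hω.1 (N + 2) le_rfl⟩
      refine ⟨hlast, ?_⟩
      have htail : ∀ n, N + 1 ≤ n → Function.update ω (N + 1) 0 n = 0 := by
        intro n hn
        by_cases hn' : n = N + 1
        · simp [hn']
        · rw [Function.update_of_ne hn']
          exact hω.1 n (by omega)
      by_cases hN : ω N = 0
      · right
        refine ⟨fun n hn => ?_, fun n hn => ?_⟩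
        · rcases Nat.eq_or_lt_of_le hn with rfl | h
          · rw [Function.update_of_ne (by omega)]; exact hN
          · exact htail n h
        · rw [Function.update_of_ne (by omega), Function.update_of_ne (by omega)]
          exact hω.2 n (by omega)
      · left
        refine ⟨htail, fun n hn => ?_⟩
        rcases Nat.lt_or_ge n N with hnN | hnN
        · rw [Function.update_of_ne (by omega), Function.update_of_ne (by omega)]
          exact hω.2 n (by omega)
        · obtain rfl : n = N := by omega
          rw [Function.update_of_ne (by omega)]
          exact fun h => hN h.1

/-! ### Truncations of `He` -/

/-- Replace the zero tail of a word of length `2 * M` by the ground pattern. -/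
def extend (M : ℕ) (ω : ℕ → ℕ) : ℕ → ℕ :=
  fun n => if n < 2 * M then ω n else if (n + 1) % 2 = 0 then 1 else 0

lemma extend_mem {M : ℕ} {ω : ℕ → ℕ} (hω : ω ∈ words (2 * M)) : extend M ω ∈ He := by
  refine ⟨fun n => ?_, 2 * M, fun n hn => by simp [extend, Nat.not_lt.2 hn]⟩
  rcases Nat.lt_or_ge (n + 1) (2 * M) with h | h
  · simp only [extend, h, show n < 2 * M by omega, if_true]
    exact hω.2 n (by omega)
  · rcases Nat.lt_or_ge n (2 * M) with h' | h'
    · have h1 := hω.2 n h'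
      have h2 := hω.1 (n + 1) h
      simp only [extend, h', if_true]
      exact fun h3 => h1 ⟨h3.1, h2⟩
    · simp only [extend, Nat.not_lt.2 h, Nat.not_lt.2 h', if_false]
      rintro ⟨h1, h2⟩
      have h3 : (n + 1) % 2 ≠ 0 := fun h3 => by simp [h3] at h1
      rw [if_pos (by omega)] at h2
      exact one_ne_zero h2

lemma extend_injOn {M : ℕ} {ω η : ℕ → ℕ} (hω : ω ∈ words (2 * M)) (hη : η ∈ words (2 * M))
    (h : extend M ω = extend M η) : ω = η := by
  funext n
  rcases Nat.lt_or_ge n (2 * M) with hn | hn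
  · simpa [extend, hn] using congrFun h n
  · rw [hω.1 n hn, hη.1 n hn]

lemma exists_extend_eq {M : ℕ} {ω : ℕ → ℕ} (hω : ω ∈ He)
    (hM : ∀ n ≥ 2 * M, ω n = if (n + 1) % 2 = 0 then 1 else 0) :
    ∃ η ∈ words (2 * M), extend M η = ω := by
  refine ⟨fun n => if n < 2 * M then ω n else 0, ⟨fun n hn => ?_, fun n hn => ?_⟩, ?_⟩
  · simp [Nat.not_lt.2 hn]
  · have h1 := hω.1 n
    rcases Nat.lt_or_ge (n + 1) (2 * M) with h | h
    · simpa only [hn, h, if_true] using h1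
    · -- the entry at `2 * M` is a zero of the ground pattern
      have h2 : ω (n + 1) = 0 := by rw [hM _ h, if_neg (by omega)]
      simp only [hn, if_true]
      exact fun h3 => h1 ⟨h3.1, h2⟩
  · funext n
    by_cases hn : n < 2 * M
    · simp [extend, hn]
    · simp only [extend, hn, if_false]
      exact (hM n (by omega)).symm

lemma finsum_eq_sum_range (f : ℕ → ℤ) (N : ℕ) (h : ∀ n, N ≤ n → f n = 0) :
    ∑ᶠ n, f n = ∑ n ∈ Finset.range N, f n := by
  refine finsum_eq_sum_of_support_subset _ fun n hn => ?_
  by_contra hn'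
  exact hn (h n (by simpa using hn'))

lemma zpow_sum_range {x : ℝ} (hx : x ≠ 0) (f : ℕ → ℤ) (N : ℕ) :
    x ^ (∑ n ∈ Finset.range N, f n) = ∏ n ∈ Finset.range N, x ^ f n := by
  induction N with
  | zero => simp
  | succ N ih => rw [Finset.sum_range_succ, Finset.prod_range_succ, zpow_add₀ hx, ih]

/-- The ground-pattern normalisation of the first `2 * M` sites: subtracting `1` at the even sites
`i` divides by `q̃ ^ i`, and the exponents of `t` in `B` and in the site weights differ by `+ 1` at
odd and `- 1` at even sites. -/
lemma prod_normalisation {q : ℝ} (hq0 : 0 < q) (M : ℕ) :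
    ∏ n ∈ Finset.range (2 * M),
      (if (n + 1) % 2 = 1 then q + q⁻¹ else (q + q⁻¹)⁻¹ * ((q ^ 4) ^ (n + 1))⁻¹)
      = (q ^ ((2 * M) ^ 2 + 2 * (2 * M)))⁻¹ := by
  have ht : q + q⁻¹ ≠ 0 := by positivity
  induction M with
  | zero => simp
  | succ M ih =>
    rw [show 2 * (M + 1) = 2 * M + 1 + 1 by ring, Finset.prod_range_succ, Finset.prod_range_succ,
      ih, if_pos (by omega), if_neg (by omega), mul_assoc, mul_inv_cancel_left₀ ht, ← mul_inv]
    congr 1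
    ring

lemma weight_extend {q : ℝ} (hq0 : 0 < q) {M : ℕ} (ω : ℕ → ℕ) :
    (q ^ 4) ^ Afun (extend M ω) * (q + q⁻¹) ^ Bfun (extend M ω)
      = (q ^ ((2 * M) ^ 2 + 2 * (2 * M)))⁻¹ * wordWeight q (2 * M) ω := by
  have ht : q + q⁻¹ ≠ 0 := by positivity
  have hx : q ^ 4 ≠ 0 := by positivity
  have htail : ∀ n, 2 * M ≤ n → extend M ω n = if (n + 1) % 2 = 0 then 1 else 0 :=
    fun n hn => by simp [extend, Nat.not_lt.2 hn]
  unfold Afun Bfun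
  rw [finsum_eq_sum_range _ (2 * M), finsum_eq_sum_range _ (2 * M), finsum_eq_sum_range _ (2 * M),
    ← Finset.sum_sub_distrib, Finset.mul_sum, zpow_sum_range hx, zpow_sum_range ht,
    ← prod_normalisation hq0, wordWeight, ← Finset.prod_mul_distrib, ← Finset.prod_mul_distrib]
  · refine Finset.prod_congr rfl fun n hn => ?_
    have hn' : extend M ω n = ω n := by simp [extend, Finset.mem_range.1 hn]
    rw [hn']
    unfold siteWeight
    generalize q + q⁻¹ = t at *
    generalize q ^ 4 = x at *
    have hcast : ((n : ℤ) + 1) * (ω n : ℤ) = (((n + 1) * ω n : ℕ) : ℤ) := by push_cast; ring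
    have ht2 : t ^ (2 : ℤ) = t * t := zpow_two t
    have hsub : ((n : ℤ) + 1) * ((ω n : ℤ) - 1) = (((n + 1) * ω n : ℕ) : ℤ) - ((n + 1 : ℕ) : ℤ) := by
      push_cast; ring
    have hz : x ^ (((n : ℤ) + 1) * ((ω n : ℤ) - 1))
        = x ^ ((n + 1) * ω n) * (x ^ (n + 1))⁻¹ := by
      rw [hsub, zpow_sub₀ hx, zpow_natCast, zpow_natCast, div_eq_mul_inv]
    rcases Nat.mod_two_eq_zero_or_one (n + 1) with h | h <;> by_cases h0 : ω n = 0
    · rw [if_neg (by omega), if_neg (by omega), if_pos ⟨h, h0⟩, if_neg (by omega), if_pos h0, hz]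
      rw [show (2 : ℤ) * (0 - 1) = -2 by norm_num, zpow_neg, ht2, mul_inv]
      ring
    · rw [if_neg (by omega), if_neg (by omega), if_neg (fun h' => h0 h'.2), if_neg (by omega),
        if_neg h0, hz, sub_zero, mul_zero, zpow_zero]
      field_simp
    · rw [if_pos h, if_neg (by omega), if_neg (by omega), if_pos h, if_pos h0, hcast, zpow_natCast,
        sub_zero, mul_zero, zpow_zero]
      field_simp
    · rw [if_pos h, if_pos ⟨h, by omega⟩, if_neg (by omega), if_pos h, if_neg h0, hcast,
        zpow_natCast, sub_zero, mul_one, ht2]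
      ring
  all_goals
    intro n hn
    rw [htail n hn]
    rcases Nat.mod_two_eq_zero_or_one (n + 1) with h | h <;> simp [h]

/-! ### Passage to the limit -/

lemma multipliable_inv_one_sub {q : ℝ} (hq0 : 0 < q) (hq1 : q < 1) :
    Multipliable (fun j : ℕ => (1 - q ^ (2 * (j + 1)))⁻¹) := by
  have hlt : ∀ j : ℕ, q ^ (2 * (j + 1)) < 1 := fun j => pow_lt_one₀ hq0.le hq1 (by omega)
  refine Real.multipliable_of_summable_log (fun j => inv_pos.2 (sub_pos.2 (hlt j))) ?_
  have hs : Summable fun j : ℕ => -q ^ (2 * (j + 1)) := by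
    have := (summable_geometric_of_lt_one (r := q ^ 2) (by positivity)
      (pow_lt_one₀ hq0.le hq1 (by omega))).mul_left (-q ^ 2)
    refine this.congr fun j => ?_
    ring
  refine (Real.summable_log_one_add_of_summable hs).neg.congr fun j => ?_
  rw [Real.log_inv, sub_eq_add_neg]

theorem statement5 (q : ℝ) (hq0 : 0 < q) (hq1 : q < 1) :
    Multipliable (fun j : ℕ => (1 - q ^ (2 * (j + 1)))⁻¹) ∧
    Seven (q ^ 4) (q + q⁻¹) = ∏' j : ℕ, (1 - q ^ (2 * (j + 1)))⁻¹ := by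
  have hmul := multipliable_inv_one_sub hq0 hq1
  refine ⟨hmul, HasSum.tsum_eq ?_⟩
  have hlim := hmul.hasProd.tendsto_prod_nat
  have hmono : Monotone fun N => ∏ j ∈ Finset.range N, (1 - q ^ (2 * (j + 1)))⁻¹ := by
    refine monotone_nat_of_le_succ fun N => ?_
    rw [Finset.prod_range_succ]
    have hlt : ∀ j : ℕ, q ^ (2 * (j + 1)) < 1 := fun j => pow_lt_one₀ hq0.le hq1 (by omega)
    refine le_mul_of_one_le_right
      (Finset.prod_nonneg fun j _ => inv_nonneg.2 (sub_pos.2 (hlt j)).le)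
      ((one_le_inv₀ (sub_pos.2 (hlt N))).2 ?_)
    have : 0 ≤ q ^ (2 * (N + 1)) := by positivity
    linarith
  set F : He → ℝ := fun ω => (q ^ 4) ^ Afun ω.1 * (q + q⁻¹) ^ Bfun ω.1 with hF
  have hF0 : ∀ ω, 0 ≤ F ω := fun ω => by simp only [hF]; positivity
  let ι : ∀ M, words (2 * M) → He := fun M ω => ⟨extend M ω.1, extend_mem ω.2⟩
  have hι : ∀ M, Function.Injective (ι M) := fun M ω η h =>
    Subtype.ext (extend_injOn ω.2 η.2 (congrArg Subtype.val h))
  have hpartial : ∀ M, HasSum ((Set.range (ι M)).indicator F)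
      (∏ j ∈ Finset.range (2 * M), (1 - q ^ (2 * (j + 1)))⁻¹) := by
    intro M
    refine hasSum_subtype_iff_indicator.1 ((hι M).hasSum_range_iff.2 ?_)
    have h := (hasSum_words hq0 hq1 (2 * M)).1.mul_left (q ^ ((2 * M) ^ 2 + 2 * (2 * M)))⁻¹
    rw [wordSum, inv_mul_cancel_left₀ (by positivity)] at h
    exact h.congr_fun fun ω => weight_extend hq0 ω.1
  refine hasSum_of_isLUB_of_nonneg _ hF0 ⟨?_, fun b hb => ?_⟩
  · rintro _ ⟨s, rfl⟩
    obtain ⟨M, hM⟩ : ∃ M, ∀ ω ∈ s, ω ∈ Set.range (ι M) := by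
      choose N hN using fun ω : He => ω.2.2
      refine ⟨s.sup N, fun ω hω => ?_⟩
      have hle : N ω ≤ s.sup N := Finset.le_sup hω
      obtain ⟨η, hη, h⟩ := exists_extend_eq (M := s.sup N) ω.2 fun n hn => hN ω n (by omega)
      exact ⟨⟨η, hη⟩, Subtype.ext h⟩
    calc ∑ ω ∈ s, F ω = ∑ ω ∈ s, (Set.range (ι M)).indicator F ω :=
          Finset.sum_congr rfl fun ω hω => (Set.indicator_of_mem (hM ω hω) F).symm
      _ ≤ ∏ j ∈ Finset.range (2 * M), (1 - q ^ (2 * (j + 1)))⁻¹ :=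
          sum_le_hasSum s (fun ω _ => Set.indicator_nonneg (fun ω _ => hF0 ω) ω) (hpartial M)
      _ ≤ _ := hmono.ge_of_tendsto hlim _
  · refine le_of_tendsto' hlim fun N => (hmono (by omega : N ≤ 2 * N)).trans ?_
    refine hasSum_le_of_sum_le (hpartial N) fun s => ?_
    exact (Finset.sum_le_sum fun ω _ => Set.indicator_le_self' (fun _ _ => hF0 _) ω).trans
      (hb ⟨s, rfl⟩)
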